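/- Let τ = (τ, ℓ) be a decorated tree with ℓ(u) ≥ 2 for every vertex u of τ and |ℓ| > 1 + α. Then for every seed tree S of size k ≥ 2: E[F_τ(T_n^S)] ≈ n^{|ℓ|/(1+α)} as n → ∞ (no logarithmic correction). -/

import Mathlib

/-!
Let `|ℓ|` be the total decoration, `D_n = (1 + α) n - 2` the normalisation of the attachment
probabilities, and `t = n - 2 / (1 + α) = D_n / (1 + α)`.

*Drift.* When a vertex `w` is attached, the embeddings into the new tree split into those into the
old tree (only the degree of `w` has changed) and those sending some `u ∈ τ` to the new vertex; the
latter has degree one. Consider weights `∏ g_v(deg φ(v))`. If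
`ℓ v * g_v d ≤ (d - 1 + α) (g_v (d + 1) - g_v d)` for all `v`, then the old embeddings alone
multiply the mean by at least `1 + |ℓ| / D_n` (`mean_oldPart_ge`), with equality under equality.
Descending factorials satisfy the inequality (`descFactorial_drift`), and the rising factorials
`(d - 1 + α) (d + α) ⋯`, which dominate them, satisfy the equality (`rise_drift`).

*Lower bound.* Every tree occurs in the chain with arbitrarily large degrees (`occurs_of_isTree`),
so the mean is positive at some time (`exists_mean_obs_pos`). From then on it is multiplied by at
least `1 + q / t` at each step, with `q = |ℓ| / (1 + α) > 1`, hence it is at least of order `t ^ q`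
(`rpow_le_of_recursion`).

*Upper bound.* With rising factorials, an embedding sending `u` to the new vertex requires `u` to be
a leaf (or the only vertex) of `τ`, and the new vertex to be attached to the image of the neighbour
`v₀` of `u`. The probability `(d - 1 + α) / D_n` of this is absorbed by the rising factorial at
`v₀`, the decoration of which goes up by one (`mean_newPart_le`). So the new embeddings contribute
`1 / D_n` times the observable of `τ - u` with total decoration `|ℓ| - ℓ u + 1 ≤ |ℓ| - 1`; here
`ℓ u ≥ 2` is used. By induction on the number of vertices this forcing is of order `t ^ (δ - 1)` for
some `δ < q`, and it does not affect the order `t ^ q` of the solution (`le_rpow_of_recursion`).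
The induction is carried out in `mean_obs_le` for all exponents `γ > 1` with `|ℓ| ≤ γ (1 + α)`,
since the total decoration of the smaller trees may fall below `1 + α`.
-/

open MeasureTheory Filter Asymptotics

noncomputable section

namespace AffinePA

instance (V : Type*) : MeasurableSpace (SimpleGraph V) := ⊤

/-- The degree of a vertex. -/
def degR {V : Type*} (G : SimpleGraph V) (v : V) : ℕ := Nat.card {w // G.Adj v w}

/-- The tree on `n+1` vertices obtained from `G` by attaching the new vertex to `u`. -/
def extendTree {n : ℕ} (G : SimpleGraph (Fin n)) (u : Fin n) : SimpleGraph (Fin (n + 1)) :=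
  SimpleGraph.fromRel fun a b =>
    (∃ a' b' : Fin n, a = Fin.castSucc a' ∧ b = Fin.castSucc b' ∧ G.Adj a' b') ∨
      (a = Fin.castSucc u ∧ b = Fin.last n)

/-- One step of the affine preferential attachment dynamics. -/
def stepMeasure (α : ℝ) {n : ℕ} (G : SimpleGraph (Fin n)) :
    Measure (SimpleGraph (Fin (n + 1))) :=
  ∑ u : Fin n,
    ENNReal.ofReal (((degR G u : ℝ) - 1 + α) / ((1 + α) * (n : ℝ) - 2)) •
      Measure.dirac (extendTree G u)

/-- The law of the α-PA tree with `m` added vertices, started from the seed `S`. -/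
def paLaw (α : ℝ) {k : ℕ} (S : SimpleGraph (Fin k)) :
    (m : ℕ) → Measure (SimpleGraph (Fin (k + m)))
  | 0 => Measure.dirac S
  | m + 1 => (paLaw α S m).bind (stepMeasure α)

/-- The weight `∏_u [deg_T(f u) - 1]_{ℓ u}` of a map `f`. -/
def embWeight {V W : Type*} [Fintype V] (T : SimpleGraph W) (ℓ : V → ℕ) (f : V → W) : ℝ :=
  ∏ u : V, ((degR T (f u) - 1).descFactorial (ℓ u) : ℝ)

/-- The observable `F_{(τ,ℓ)}(T)`. -/
def obsG {V W : Type*} [Fintype V] (τ : SimpleGraph V) (ℓ : V → ℕ) (T : SimpleGraph W) : ℝ :=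
  ∑ᶠ φ : τ ↪g T, embWeight T ℓ ⇑φ

/-- The weight `w(τ,ℓ)` of a decorated tree. -/
def weightG {V : Type*} [Fintype V] (τ : SimpleGraph V) (ℓ : V → ℕ) : ℕ :=
  if Fintype.card V ≤ 2 ∧ ∀ v, ℓ v = 0 then 1
  else (∑ v, ℓ v) + Nat.card {v // degR τ v = 1 ∧ ℓ v = 0}

/-- A decorated tree: a finite graph on `Fin n` with nonnegative integer decorations. -/
structure DecTree where
  n : ℕ
  tree : SimpleGraph (Fin n)
  dec : Fin n → ℕ

def DecTree.wt (τ : DecTree) : ℕ := weightG τ.tree τ.dec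

def DecTree.decSum (τ : DecTree) : ℕ := ∑ v, τ.dec v

def DecTree.obs (τ : DecTree) {W : Type*} (T : SimpleGraph W) : ℝ := obsG τ.tree τ.dec T

/-- The strict partial order `≺` on decorated trees. -/
def DecLt (σ τ : DecTree) : Prop :=
  (σ.wt < τ.wt ∧ σ.n ≤ τ.n) ∨ (σ.wt = τ.wt ∧ σ.n < τ.n) ∨
    (σ.wt = τ.wt ∧ σ.n = τ.n ∧ σ.decSum < τ.decSum)

open Classical in
/-- `F_{τ+τ}(T)`: sum over pairs of embeddings with overlapping images. -/
def obsOverlapG {V W : Type*} [Fintype V] (τ : SimpleGraph V) (ℓ : V → ℕ)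
    (T : SimpleGraph W) : ℝ :=
  ∑ᶠ (φ₁ : τ ↪g T) (φ₂ : τ ↪g T),
    if (Set.range ⇑φ₁ ∩ Set.range ⇑φ₂).Nonempty then
      embWeight T ℓ ⇑φ₁ * embWeight T ℓ ⇑φ₂
    else 0

open Classical in
/-- `F_{τ,σ}(T)`: sum over pairs of embeddings with disjoint images. -/
def obsDisjG {V₁ V₂ W : Type*} [Fintype V₁] [Fintype V₂] (τ : SimpleGraph V₁) (ℓτ : V₁ → ℕ)
    (σ : SimpleGraph V₂) (ℓσ : V₂ → ℕ) (T : SimpleGraph W) : ℝ :=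
  ∑ᶠ (φ₁ : τ ↪g T) (φ₂ : σ ↪g T),
    if Disjoint (Set.range ⇑φ₁) (Set.range ⇑φ₂) then
      embWeight T ℓτ ⇑φ₁ * embWeight T ℓσ ⇑φ₂
    else 0

/-- `f ≈ g` : same order of magnitude, eventually. -/
def asympEquiv (f g : ℕ → ℝ) : Prop :=
  ∃ C : ℝ, 0 < C ∧ ∀ᶠ n in atTop, f n ≤ C * g n ∧ g n ≤ C * f n

/-- Descending factorial `[x]_l` of a real number. -/
def descPoch (x : ℝ) (l : ℕ) : ℝ := ∏ i ∈ Finset.range l, (x - (i : ℝ))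

/-- Total variation distance between two measures. -/
def tvDist {X : Type*} [MeasurableSpace X] (μ ν : Measure X) : ℝ :=
  ⨆ s : {s : Set X // MeasurableSet s}, |(μ ↑s).toReal - (ν ↑s).toReal|

open Classical in
/-- The contribution to `F_τ` of embeddings whose image meets the seed. -/
def obsMeetSeed (k m : ℕ) {r : ℕ} (τ : SimpleGraph (Fin r)) (ℓ : Fin r → ℕ)
    (T : SimpleGraph (Fin (k + m))) : ℝ :=
  ∑ᶠ φ : τ ↪g T,
    if ∃ (x : Fin r) (y : Fin k), φ x = Fin.castAdd m y then embWeight T ℓ ⇑φ else 0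

/-- The contribution to `F_τ` of embeddings contained in the seed. -/
def obsInSeed (k m : ℕ) {r : ℕ} (τ : SimpleGraph (Fin r)) (ℓ : Fin r → ℕ)
    (S : SimpleGraph (Fin k)) (T : SimpleGraph (Fin (k + m))) : ℝ :=
  ∑ᶠ φ : τ ↪g S, embWeight T ℓ fun u => Fin.castAdd m (φ u)

/-- `D_{τ,d}(T)`: the number of perfect embeddings of `(τ,d)` in `T`. -/
def perfCount {V W : Type*} (τ : SimpleGraph V) (d : V → ℕ) (T : SimpleGraph W) : ℕ :=
  Nat.card {φ : τ ↪g T // ∀ u, degR T (φ u) = d u}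

/-- `τ` is `(T₁,T₂)`-blind. -/
def IsBlind {V W₁ W₂ : Type*} (τ : SimpleGraph V) (T₁ : SimpleGraph W₁)
    (T₂ : SimpleGraph W₂) : Prop :=
  ∀ d : V → ℕ, (∀ u, 1 ≤ d u) → perfCount τ d T₁ = perfCount τ d T₂

/-- `D_{σ,τ,d}(T)`: perfect embeddings of `(τ,d)` meeting the seed exactly in `φ(A)`. -/
def perfCountSeed (k m : ℕ) {r : ℕ} (τ : SimpleGraph (Fin r)) (A : Finset (Fin r))
    (d : Fin r → ℕ) (T : SimpleGraph (Fin (k + m))) : ℕ :=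
  Nat.card {φ : τ ↪g T //
    (∀ u, degR T (φ u) = d u) ∧ ∀ u : Fin r, (∃ y : Fin k, φ u = Fin.castAdd m y) ↔ u ∈ A}

/-- The σ-algebra generated by `T_0, …, T_m`. -/
def natFilt {Ω : Type*} [MeasurableSpace Ω] {k : ℕ}
    (T : (m : ℕ) → Ω → SimpleGraph (Fin (k + m))) (m : ℕ) : MeasurableSpace Ω :=
  ⨆ j ∈ Set.Iic m, MeasurableSpace.comap (T j) inferInstance

/-- `(T_m)` is an α-PA chain started from the seed `S`, on the probability space `(Ω,P)`. -/
structure IsPAChain (α : ℝ) {k : ℕ} (S : SimpleGraph (Fin k)) {Ω : Type*} [MeasurableSpace Ω]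
    (P : Measure Ω) (T : (m : ℕ) → Ω → SimpleGraph (Fin (k + m))) : Prop where
  isProb : IsProbabilityMeasure P
  meas : ∀ m, Measurable (T m)
  init : ∀ᵐ ω ∂P, T 0 ω = S
  step : ∀ (m : ℕ) (f : SimpleGraph (Fin (k + (m + 1))) → ℝ),
    P[(fun ω => f (T (m + 1) ω))|natFilt T m] =ᵐ[P]
      fun ω => ∫ G, f G ∂stepMeasure α (T m ω)

/-- The natural filtration of the chain. -/
def natFiltration {Ω : Type*} [mΩ : MeasurableSpace Ω] {k : ℕ}
    (T : (m : ℕ) → Ω → SimpleGraph (Fin (k + m))) (hT : ∀ m, Measurable (T m)) :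
    Filtration ℕ mΩ where
  seq := natFilt T
  mono' _ _ hij := biSup_mono fun _ hx => le_trans hx hij
  le' _ := iSup_le fun l => iSup_le fun _ => (hT l).comap_le

/-- Isomorphism of simple graphs as a setoid. -/
def isoSetoid (n : ℕ) : Setoid (SimpleGraph (Fin n)) where
  r G H := Nonempty (G ≃g H)
  iseqv := ⟨fun G => ⟨RelIso.refl G.Adj⟩, fun ⟨e⟩ => ⟨e.symm⟩, fun ⟨e⟩ ⟨f⟩ => ⟨e.trans f⟩⟩

/-- Isomorphism classes of graphs on `n` vertices. -/
def IsoClass (n : ℕ) : Type := Quotient (isoSetoid n)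

instance (n : ℕ) : MeasurableSpace (IsoClass n) := ⊤

/-- The law of the isomorphism class of the α-PA tree with `n` vertices grown from `S`. -/
def isoClassLaw (α : ℝ) {k : ℕ} (S : SimpleGraph (Fin k)) (n : ℕ) : Measure (IsoClass n) :=
  if h : k ≤ n then
    (paLaw α S (n - k)).map fun G =>
      Quotient.mk (isoSetoid n) (G.map (finCongr (Nat.add_sub_cancel' h)).toEmbedding)
  else 0



/-! ### One growth step: adjacency and degrees -/

lemma extendTree_adj_castSucc {n : ℕ} (T : SimpleGraph (Fin n)) (w a b : Fin n) :
    (extendTree T w).Adj a.castSucc b.castSucc ↔ T.Adj a b := by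
  simp only [extendTree, SimpleGraph.fromRel_adj]
  constructor
  · rintro ⟨_, (⟨a', b', ha, hb, h⟩ | ⟨_, h⟩) | (⟨a', b', ha, hb, h⟩ | ⟨_, h⟩)⟩
    · rw [Fin.castSucc_inj] at ha hb
      subst ha hb; exact h
    · exact absurd h (Fin.castSucc_lt_last _).ne
    · rw [Fin.castSucc_inj] at ha hb
      subst ha hb; exact h.symm
    · exact absurd h (Fin.castSucc_lt_last _).ne
  · intro h
    exact ⟨fun e => h.ne (Fin.castSucc_injective _ e), Or.inl (Or.inl ⟨a, b, rfl, rfl, h⟩)⟩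

lemma extendTree_adj_last {n : ℕ} (T : SimpleGraph (Fin n)) (w a : Fin n) :
    (extendTree T w).Adj a.castSucc (Fin.last n) ↔ a = w := by
  simp only [extendTree, SimpleGraph.fromRel_adj]
  constructor
  · rintro ⟨_, (⟨a', b', ha, hb, h⟩ | ⟨h, _⟩) | (⟨a', b', ha, hb, h⟩ | ⟨_, h⟩)⟩
    · exact absurd hb.symm (Fin.castSucc_lt_last _).ne
    · exact Fin.castSucc_injective _ h
    · exact absurd ha.symm (Fin.castSucc_lt_last _).ne
    · exact absurd h (Fin.castSucc_lt_last _).ne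
  · rintro rfl
    exact ⟨(Fin.castSucc_lt_last _).ne, Or.inl (Or.inr ⟨rfl, trivial⟩)⟩

open Classical in
lemma degR_eq_sum {n : ℕ} (T : SimpleGraph (Fin n)) (v : Fin n) :
    degR T v = ∑ w, if T.Adj v w then 1 else 0 := by
  rw [degR, Nat.card_eq_fintype_card, Fintype.card_subtype, Finset.card_filter]

lemma degR_castSucc {n : ℕ} (T : SimpleGraph (Fin n)) (w a : Fin n) :
    degR (extendTree T w) a.castSucc = degR T a + if a = w then 1 else 0 := by
  classical
  rw [degR_eq_sum, degR_eq_sum, Fin.sum_univ_castSucc]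
  simp only [extendTree_adj_castSucc, extendTree_adj_last]

lemma degR_last {n : ℕ} (T : SimpleGraph (Fin n)) (w : Fin n) :
    degR (extendTree T w) (Fin.last n) = 1 := by
  classical
  rw [degR_eq_sum, Fin.sum_univ_castSucc]
  simp only [(extendTree T w).adj_comm (Fin.last n), extendTree_adj_last]
  simp

/-- The two facts about a tree on `Fin n` (`n ≥ 2`) that make the attachment probabilities a
probability vector: there is no isolated vertex and the degrees sum to `2(n-1)`. -/
def Good {n : ℕ} (T : SimpleGraph (Fin n)) : Prop :=
  (∀ v, 1 ≤ degR T v) ∧ (∑ v, degR T v) + 2 = 2 * n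

lemma Good.extend {n : ℕ} {T : SimpleGraph (Fin n)} (h : Good T) (w : Fin n) :
    Good (extendTree T w) := by
  refine ⟨fun v => ?_, ?_⟩
  · refine Fin.lastCases ?_ (fun a => ?_) v
    · rw [degR_last]
    · rw [degR_castSucc]; have := h.1 a; omega
  · rw [Fin.sum_univ_castSucc, degR_last]
    simp only [degR_castSucc, Finset.sum_add_distrib, Finset.sum_ite_eq', Finset.mem_univ, if_true]
    have := h.2
    omega

lemma degR_eq_degree {V : Type*} [Fintype V] (G : SimpleGraph V) [DecidableRel G.Adj] (v : V) :
    degR G v = G.degree v := by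
  classical
  rw [degR, Nat.card_eq_fintype_card, ← SimpleGraph.card_neighborSet_eq_degree]
  exact Fintype.card_congr (Equiv.refl _)

lemma Good.of_isTree {k : ℕ} (hk : 2 ≤ k) {S : SimpleGraph (Fin k)} (hS : S.IsTree) : Good S := by
  classical
  have : Nontrivial (Fin k) := Fin.nontrivial_iff_two_le.2 hk
  simp only [Good, degR_eq_degree]
  refine ⟨fun v => hS.connected.preconnected.degree_pos_of_nontrivial v, ?_⟩
  have h1 := hS.card_edgeFinset
  rw [SimpleGraph.sum_degrees_eq_twice_card_edges]
  rw [Fintype.card_fin] at h1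
  omega

/-! ### The expectation of the chain -/

/-- The probability that the next vertex is attached to `w`. -/
def attachProb (α : ℝ) {n : ℕ} (T : SimpleGraph (Fin n)) (w : Fin n) : ℝ :=
  ((degR T w : ℝ) - 1 + α) / ((1 + α) * (n : ℝ) - 2)

/-- The conditional expectation of `f` after one growth step started from `T`. -/
def stepMean (α : ℝ) {n : ℕ} (f : SimpleGraph (Fin (n + 1)) → ℝ) (T : SimpleGraph (Fin n)) : ℝ :=
  ∑ w, attachProb α T w * f (extendTree T w)

lemma denom_pos {α : ℝ} (hα : 0 < α) {n : ℕ} (hn : 2 ≤ n) : 0 < (1 + α) * (n : ℝ) - 2 := by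
  have : (2 : ℝ) ≤ n := by exact_mod_cast hn
  nlinarith

lemma attach_num_pos {α : ℝ} (hα : 0 < α) {n : ℕ} {T : SimpleGraph (Fin n)} (hT : Good T)
    (w : Fin n) : 0 < (degR T w : ℝ) - 1 + α := by
  have : (1 : ℝ) ≤ degR T w := by exact_mod_cast hT.1 w
  linarith

lemma attachProb_pos {α : ℝ} (hα : 0 < α) {n : ℕ} (hn : 2 ≤ n) {T : SimpleGraph (Fin n)}
    (hT : Good T) (w : Fin n) : 0 < attachProb α T w :=
  div_pos (attach_num_pos hα hT w) (denom_pos hα hn)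

lemma sum_attachProb {α : ℝ} (hα : 0 < α) {n : ℕ} (hn : 2 ≤ n) {T : SimpleGraph (Fin n)}
    (hT : Good T) : ∑ w, attachProb α T w = 1 := by
  simp only [attachProb]
  rw [← Finset.sum_div, div_eq_one_iff_eq (denom_pos hα hn).ne']
  have h : (∑ v, (degR T v : ℝ)) + 2 = 2 * n := by exact_mod_cast hT.2
  simp only [Finset.sum_add_distrib, Finset.sum_sub_distrib, Finset.sum_const, Finset.card_univ,
    Fintype.card_fin, nsmul_eq_mul]
  linarith

instance (V : Type*) : DiscreteMeasurableSpace (SimpleGraph V) := ⟨fun _ => trivial⟩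

instance (α : ℝ) {n : ℕ} (T : SimpleGraph (Fin n)) : IsFiniteMeasure (stepMeasure α T) := by
  refine ⟨?_⟩
  simp only [stepMeasure, Measure.coe_finsetSum, Finset.sum_apply, Measure.smul_apply, smul_eq_mul]
  exact ENNReal.sum_lt_top.2 fun w _ => ENNReal.mul_lt_top ENNReal.ofReal_lt_top
    (measure_lt_top _ _)

lemma paLaw_succ_apply (α : ℝ) {k : ℕ} (S : SimpleGraph (Fin k)) (m : ℕ)
    (s : Set (SimpleGraph (Fin (k + (m + 1))))) :
    paLaw α S (m + 1) s = ∑ T, stepMeasure α T s * paLaw α S m {T} := by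
  rw [paLaw]
  refine (Measure.bind_apply (MeasurableSet.of_discrete) measurable_from_top.aemeasurable).trans ?_
  exact lintegral_fintype _

instance instFinitePaLaw (α : ℝ) {k : ℕ} (S : SimpleGraph (Fin k)) (m : ℕ) :
    IsFiniteMeasure (paLaw α S m) := by
  induction m with
  | zero => rw [paLaw]; infer_instance
  | succ m ih =>
    refine ⟨?_⟩
    rw [paLaw_succ_apply]
    exact ENNReal.sum_lt_top.2 fun w _ => ENNReal.mul_lt_top (measure_lt_top _ _)
      (measure_lt_top _ _)

lemma integral_paLaw (α : ℝ) {k : ℕ} (S : SimpleGraph (Fin k)) (m : ℕ)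
    (f : SimpleGraph (Fin (k + m)) → ℝ) :
    ∫ G, f G ∂paLaw α S m = ∑ G, (paLaw α S m).real {G} * f G :=
  integral_fintype (.of_finite)

lemma integral_stepMeasure {α : ℝ} (hα : 0 < α) {n : ℕ} (hn : 2 ≤ n) {T : SimpleGraph (Fin n)}
    (hT : Good T) (f : SimpleGraph (Fin (n + 1)) → ℝ) :
    ∫ G, f G ∂stepMeasure α T = stepMean α f T := by
  rw [stepMeasure, integral_finsetSum_measure fun _ _ =>
    Integrable.smul_measure .of_finite ENNReal.ofReal_ne_top]
  refine Finset.sum_congr rfl fun w _ => ?_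
  have h := (attachProb_pos hα hn hT w).le
  rw [attachProb] at h
  rw [integral_smul_measure, integral_dirac, ENNReal.toReal_ofReal h, smul_eq_mul, attachProb]

lemma integral_paLaw_succ' (α : ℝ) {k : ℕ} (S : SimpleGraph (Fin k)) (m : ℕ)
    (f : SimpleGraph (Fin (k + (m + 1))) → ℝ) :
    ∫ G, f G ∂paLaw α S (m + 1) =
      ∑ T, (paLaw α S m).real {T} * ∫ G, f G ∂stepMeasure α T := by
  have h : ∀ G, (paLaw α S (m + 1)).real {G} =
      ∑ T, (paLaw α S m).real {T} * (stepMeasure α T).real {G} := by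
    intro G
    rw [Measure.real, paLaw_succ_apply, ENNReal.toReal_sum fun T _ =>
      (ENNReal.mul_lt_top (measure_lt_top _ _) (measure_lt_top _ _)).ne]
    refine Finset.sum_congr rfl fun T _ => ?_
    rw [ENNReal.toReal_mul, mul_comm]
    rfl
  rw [integral_paLaw]
  simp_rw [h, Finset.sum_mul]
  rw [Finset.sum_comm]
  refine Finset.sum_congr rfl fun T _ => ?_
  rw [integral_fintype (.of_finite), Finset.mul_sum]
  refine Finset.sum_congr rfl fun G _ => ?_
  rw [smul_eq_mul, mul_assoc]

/-- The chain lives on good graphs. -/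
lemma good_of_paLaw {α : ℝ} {k : ℕ} {S : SimpleGraph (Fin k)} (hS : Good S) (m : ℕ)
    (G : SimpleGraph (Fin (k + m))) (hG : (paLaw α S m).real {G} ≠ 0) : Good G := by
  classical
  induction m with
  | zero =>
    rw [paLaw, Measure.real, Measure.dirac_apply] at hG
    by_contra h
    apply hG
    rw [Set.indicator_of_notMem]
    · rfl
    · rintro rfl; exact h hS
  | succ m ih =>
    rw [Measure.real, paLaw_succ_apply] at hG
    have h0 : ∑ T, stepMeasure α T {G} * paLaw α S m {T} ≠ 0 := fun h => hG (by rw [h]; rfl)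
    obtain ⟨T, -, hT⟩ := Finset.exists_ne_zero_of_sum_ne_zero h0
    have hT1 := left_ne_zero_of_mul hT
    have hT2 := right_ne_zero_of_mul hT
    have hgood : Good T := by
      apply ih
      rw [Measure.real, ENNReal.toReal_ne_zero]
      exact ⟨hT2, measure_ne_top _ _⟩
    simp only [stepMeasure, Measure.coe_finsetSum, Finset.sum_apply, Measure.smul_apply,
      smul_eq_mul] at hT1
    obtain ⟨w, -, hw⟩ := Finset.exists_ne_zero_of_sum_ne_zero hT1
    have hw2 := right_ne_zero_of_mul hw
    rw [Measure.dirac_apply] at hw2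
    have : extendTree T w = G := by
      by_contra hne
      exact hw2 (Set.indicator_of_notMem (by simpa using hne) _)
    rw [← this]
    exact hgood.extend w

/-- The tower property: averaging over `m + 1` steps is averaging `stepMean` over `m` steps. -/
lemma integral_paLaw_succ {α : ℝ} (hα : 0 < α) {k : ℕ} (hk : 2 ≤ k) {S : SimpleGraph (Fin k)}
    (hS : Good S) (m : ℕ) (f : SimpleGraph (Fin (k + m + 1)) → ℝ) :
    ∫ G, f G ∂paLaw α S (m + 1) = ∫ T, stepMean α f T ∂paLaw α S m := by
  rw [integral_paLaw α S m]
  refine (integral_paLaw_succ' α S m f).trans (Finset.sum_congr rfl fun T _ => ?_)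
  by_cases h : (paLaw α S m).real {T} = 0
  · rw [h, zero_mul, zero_mul]
  · congr 1
    exact integral_stepMeasure hα (by omega) (good_of_paLaw hS m T h) f

lemma integral_paLaw_mono {α : ℝ} {k : ℕ} {S : SimpleGraph (Fin k)} (hS : Good S) (m : ℕ)
    {f g : SimpleGraph (Fin (k + m)) → ℝ} (h : ∀ T, Good T → f T ≤ g T) :
    ∫ T, f T ∂paLaw α S m ≤ ∫ T, g T ∂paLaw α S m := by
  rw [integral_paLaw, integral_paLaw]
  refine Finset.sum_le_sum fun T _ => ?_
  by_cases hT : (paLaw α S m).real {T} = 0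
  · rw [hT, zero_mul, zero_mul]
  · exact mul_le_mul_of_nonneg_left (h T (good_of_paLaw hS m T hT)) measureReal_nonneg

lemma integral_paLaw_const {α : ℝ} (hα : 0 < α) {k : ℕ} (hk : 2 ≤ k) {S : SimpleGraph (Fin k)}
    (hS : Good S) (m : ℕ) (c : ℝ) : ∫ _, c ∂paLaw α S m = c := by
  induction m with
  | zero => rw [paLaw, integral_dirac]
  | succ m ih =>
    have h : ∀ T : SimpleGraph (Fin (k + m)), Good T → stepMean α (fun _ => c) T = c := fun T hT => by
      simp only [stepMean, ← Finset.sum_mul, sum_attachProb hα (by omega : 2 ≤ k + m) hT, one_mul]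
    refine (integral_paLaw_succ hα hk hS m _).trans (Eq.trans ?_ ih)
    exact le_antisymm (integral_paLaw_mono hS m fun T hT => (h T hT).le)
      (integral_paLaw_mono hS m fun T hT => (h T hT).ge)

lemma paLaw_real_extend_pos {α : ℝ} (hα : 0 < α) {k : ℕ} (hk : 2 ≤ k) {S : SimpleGraph (Fin k)}
    (hS : Good S) (m : ℕ) (T : SimpleGraph (Fin (k + m))) (hT : 0 < (paLaw α S m).real {T})
    (w : Fin (k + m)) : 0 < (paLaw α S (m + 1)).real {extendTree T w} := by
  classical
  have h1 : (paLaw α S (m + 1)).real {extendTree T w} =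
      ∫ G, (if G = extendTree T w then (1 : ℝ) else 0) ∂paLaw α S (m + 1) := by
    rw [integral_paLaw]; simp
  rw [h1, integral_paLaw_succ hα hk hS m fun G => if G = extendTree T w then (1 : ℝ) else 0,
    integral_paLaw]
  have hnn : ∀ T', Good T' →
      0 ≤ stepMean α (fun G => if G = extendTree T w then (1 : ℝ) else 0) T' := fun T' hT' =>
    Finset.sum_nonneg fun v _ => mul_nonneg (attachProb_pos hα (by omega) hT' v).le
      (by positivity)
  refine Finset.sum_pos' (fun T' _ => ?_) ⟨T, Finset.mem_univ _, mul_pos hT ?_⟩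
  · by_cases h : (paLaw α S m).real {T'} = 0
    · rw [h, zero_mul]
    · exact mul_nonneg measureReal_nonneg (hnn T' (good_of_paLaw hS m T' h))
  · have hg := good_of_paLaw hS m T hT.ne'
    refine Finset.sum_pos' (fun v _ => mul_nonneg (attachProb_pos hα (by omega) hg v).le
      (by positivity)) ⟨w, Finset.mem_univ _, ?_⟩
    simp only [if_true, mul_one]
    exact attachProb_pos hα (by omega) hg w

/-! ### Weighted embedding sums and their one-step drift -/

/-- `φ` is (the underlying map of) a graph embedding of `τ` into `T`. -/
def IsEmb {V W : Type*} (τ : SimpleGraph V) (T : SimpleGraph W) (φ : V → W) : Prop :=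
  Function.Injective φ ∧ ∀ a b, T.Adj (φ a) (φ b) ↔ τ.Adj a b

open Classical in
/-- The sum over all embeddings `φ` of `τ` into `T` of `∏_v g v (deg (φ v))`, written as a sum over
all maps so that finite-sum manipulations apply. -/
def obsSum {V : Type*} [Fintype V] {n : ℕ} (τ : SimpleGraph V) (g : V → ℕ → ℝ)
    (T : SimpleGraph (Fin n)) : ℝ :=
  ∑ φ : V → Fin n, if IsEmb τ T φ then ∏ v, g v (degR T (φ v)) else 0

lemma obsG_eq_obsSum {V : Type*} [Fintype V] {n : ℕ} (τ : SimpleGraph V) (ℓ : V → ℕ)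
    (T : SimpleGraph (Fin n)) :
    obsG τ ℓ T = obsSum τ (fun v d => ((d - 1).descFactorial (ℓ v) : ℝ)) T := by
  classical
  let e : (τ ↪g T) ≃ {φ : V → Fin n // IsEmb τ T φ} :=
    { toFun := fun φ => ⟨φ, φ.injective, fun a b => φ.map_rel_iff⟩
      invFun := fun φ => ⟨⟨φ.1, φ.2.1⟩, fun {a b} => φ.2.2 a b⟩
      left_inv := fun φ => by ext; rfl
      right_inv := fun φ => rfl }
  have : Fintype (τ ↪g T) := Fintype.ofEquiv _ e.symm
  rw [obsG, finsum_eq_sum_of_fintype, obsSum, ← Finset.sum_filter, ← Finset.sum_subtype_eq_sum_filter,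
    Finset.subtype_univ, ← e.sum_comp]
  rfl

lemma obsSum_nonneg {V : Type*} [Fintype V] {n : ℕ} (τ : SimpleGraph V) {g : V → ℕ → ℝ}
    (hg : ∀ v d, 0 ≤ g v d) (T : SimpleGraph (Fin n)) : 0 ≤ obsSum τ g T :=
  Finset.sum_nonneg fun φ _ => by
    split_ifs
    · exact Finset.prod_nonneg fun v _ => hg _ _
    · exact le_rfl

lemma obsSum_mono {V : Type*} [Fintype V] {n : ℕ} (τ : SimpleGraph V) {g h : V → ℕ → ℝ}
    (hg : ∀ v d, 0 ≤ g v d) (hgh : ∀ v d, g v d ≤ h v d) (T : SimpleGraph (Fin n)) :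
    obsSum τ g T ≤ obsSum τ h T :=
  Finset.sum_le_sum fun φ _ => by
    split_ifs
    · exact Finset.prod_le_prod (fun v _ => hg _ _) fun v _ => hgh _ _
    · exact le_rfl

lemma isEmb_castSucc {V : Type*} {n : ℕ} {τ : SimpleGraph V} {T : SimpleGraph (Fin n)} {w : Fin n}
    {ψ : V → Fin n} : IsEmb τ (extendTree T w) (fun v => (ψ v).castSucc) ↔ IsEmb τ T ψ := by
  simp only [IsEmb, extendTree_adj_castSucc]
  refine and_congr_left fun _ => ⟨fun h a b hab => h (congrArg _ hab), fun h => ?_⟩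
  exact (Fin.castSucc_injective n).comp h

/-- The map on `V` sending `u` to the newest vertex and extending `χ` elsewhere. -/
def extendMap {V : Type*} [DecidableEq V] {n : ℕ} (u : V) (χ : ({u}ᶜ : Set V) → Fin n) (v : V) :
    Fin (n + 1) :=
  if h : v = u then Fin.last n else (χ ⟨v, h⟩).castSucc

lemma extendMap_self {V : Type*} [DecidableEq V] {n : ℕ} (u : V) (χ : ({u}ᶜ : Set V) → Fin n) :
    extendMap u χ u = Fin.last n := dif_pos rfl

lemma extendMap_coe {V : Type*} [DecidableEq V] {n : ℕ} (u : V) (χ : ({u}ᶜ : Set V) → Fin n)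
    (v : ({u}ᶜ : Set V)) : extendMap u χ v = (χ v).castSucc := dif_neg v.2

lemma isEmb_extendMap {V : Type*} [DecidableEq V] {n : ℕ} {τ : SimpleGraph V}
    {T : SimpleGraph (Fin n)} {w : Fin n} {u : V} {χ : ({u}ᶜ : Set V) → Fin n} :
    IsEmb τ (extendTree T w) (extendMap u χ) ↔
      IsEmb (τ.induce {u}ᶜ) T χ ∧ ∀ v : ({u}ᶜ : Set V), χ v = w ↔ τ.Adj v u := by
  constructor
  · rintro ⟨hi, ha⟩
    refine ⟨⟨fun a b hab => ?_, fun a b => ?_⟩, fun v => ?_⟩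
    · apply Subtype.ext
      apply hi
      rw [extendMap_coe, extendMap_coe, hab]
    · rw [← extendTree_adj_castSucc T w, ← extendMap_coe, ← extendMap_coe, ha]
      rfl
    · rw [← extendTree_adj_last T w, ← extendMap_coe, ← extendMap_self u χ, ha]
  · rintro ⟨⟨hi, ha⟩, hw⟩
    refine ⟨fun a b hab => ?_, fun a b => ?_⟩
    · by_cases h1 : a = u <;> by_cases h2 : b = u
      · rw [h1, h2]
      · subst h1
        rw [extendMap_self, extendMap_coe a χ ⟨b, h2⟩] at hab
        exact absurd hab.symm (Fin.castSucc_lt_last _).ne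
      · subst h2
        rw [extendMap_self, extendMap_coe b χ ⟨a, h1⟩] at hab
        exact absurd hab (Fin.castSucc_lt_last _).ne
      · rw [extendMap_coe u χ ⟨a, h1⟩, extendMap_coe u χ ⟨b, h2⟩] at hab
        exact congrArg Subtype.val (hi (Fin.castSucc_injective _ hab))
    · by_cases h1 : a = u <;> by_cases h2 : b = u
      · subst h1 h2; simp
      · subst h1
        rw [extendMap_self, extendMap_coe a χ ⟨b, h2⟩, SimpleGraph.adj_comm, extendTree_adj_last,
          hw, SimpleGraph.adj_comm]
      · subst h2
        rw [extendMap_self, extendMap_coe b χ ⟨a, h1⟩, extendTree_adj_last, hw]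
      · rw [extendMap_coe u χ ⟨a, h1⟩, extendMap_coe u χ ⟨b, h2⟩, extendTree_adj_castSucc, ha]
        rfl

/-- An injective map into `Fin (n + 1)` either avoids the last vertex or takes it exactly once. -/
lemma map_cases {V : Type*} [DecidableEq V] {n : ℕ} {φ : V → Fin (n + 1)}
    (hφ : Function.Injective φ) :
    (∃ ψ : V → Fin n, φ = fun v => (ψ v).castSucc) ∨
      ∃ (u : V) (χ : ({u}ᶜ : Set V) → Fin n), φ = extendMap u χ := by
  by_cases h : ∃ u, φ u = Fin.last n
  · obtain ⟨u, hu⟩ := h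
    right
    have hne : ∀ v : ({u}ᶜ : Set V), φ v ≠ Fin.last n := fun v hv => v.2 (hφ (hv.trans hu.symm))
    refine ⟨u, fun v => (φ v).castPred (hne v), funext fun v => ?_⟩
    by_cases hv : v = u
    · subst hv; rw [extendMap_self, hu]
    · rw [extendMap_coe u _ ⟨v, hv⟩]; simp
  · left
    push Not at h
    exact ⟨fun v => (φ v).castPred (h v), funext fun v => by simp⟩

/-- A nonnegative sum is at most the sum over a family of maps covering its support. -/
lemma sum_le_sum_of_cover {A B C : Type*} [Fintype A] [Fintype B] [Fintype C] (H : A → ℝ)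
    (hH : ∀ a, 0 ≤ H a) (f : B → A) (g : C → A)
    (hc : ∀ a, H a ≠ 0 → (∃ b, a = f b) ∨ ∃ c, a = g c) :
    ∑ a, H a ≤ ∑ b, H (f b) + ∑ c, H (g c) := by
  classical
  have h1 : ∀ b, H (f b) = ∑ a, if a = f b then H a else 0 := fun b => by simp
  have h2 : ∀ c, H (g c) = ∑ a, if a = g c then H a else 0 := fun b => by simp
  rw [Finset.sum_congr rfl fun b _ => h1 b, Finset.sum_congr rfl fun c _ => h2 c,
    Finset.sum_comm, Finset.sum_comm (s := (Finset.univ : Finset C)), ← Finset.sum_add_distrib]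
  refine Finset.sum_le_sum fun a _ => ?_
  have nn1 : 0 ≤ ∑ b, if a = f b then H a else 0 :=
    Finset.sum_nonneg fun b _ => by split_ifs; exacts [hH a, le_rfl]
  have nn2 : 0 ≤ ∑ c, if a = g c then H a else 0 :=
    Finset.sum_nonneg fun b _ => by split_ifs; exacts [hH a, le_rfl]
  by_cases ha : H a = 0
  · rw [ha] at nn1 nn2 ⊢
    exact add_nonneg nn1 nn2
  · rcases hc a ha with ⟨b, hb⟩ | ⟨c, hc⟩
    · have := Finset.single_le_sum (f := fun b => if a = f b then H a else 0)
        (fun b _ => by split_ifs; exacts [hH a, le_rfl]) (Finset.mem_univ b)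
      simp only [← hb, if_true] at this
      linarith
    · have := Finset.single_le_sum (f := fun c => if a = g c then H a else 0)
        (fun b _ => by split_ifs; exacts [hH a, le_rfl]) (Finset.mem_univ c)
      simp only [← hc, if_true] at this
      linarith

open Classical in
/-- The part of `obsSum τ g (extendTree T w)` coming from embeddings that avoid the new vertex. -/
def oldPart {V : Type*} [Fintype V] {n : ℕ} (τ : SimpleGraph V) (g : V → ℕ → ℝ)
    (T : SimpleGraph (Fin n)) (w : Fin n) : ℝ :=
  ∑ ψ : V → Fin n, if IsEmb τ T ψ then ∏ v, g v (degR T (ψ v) + if ψ v = w then 1 else 0) else 0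

open Classical in
/-- The part of `obsSum τ g (extendTree T w)` coming from embeddings sending `u` to the new
vertex. -/
def newPart {V : Type*} [Fintype V] {n : ℕ} (τ : SimpleGraph V) (g : V → ℕ → ℝ)
    (T : SimpleGraph (Fin n)) (w : Fin n) (u : V) : ℝ :=
  ∑ χ : ({u}ᶜ : Set V) → Fin n,
    if IsEmb (τ.induce {u}ᶜ) T χ ∧ ∀ v : ({u}ᶜ : Set V), χ v = w ↔ τ.Adj v u then
      g u 1 * ∏ v : ({u}ᶜ : Set V), g v (degR T (χ v) + if χ v = w then 1 else 0) else 0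

lemma prod_compl_singleton {V : Type*} [Fintype V] [DecidableEq V]
    (u : V) [Fintype ({u}ᶜ : Set V)] (f : V → ℝ) :
    ∏ v, f v = f u * ∏ v : ({u}ᶜ : Set V), f v := by
  rw [← Finset.mul_prod_erase Finset.univ f (Finset.mem_univ u)]
  congr 1
  refine (Finset.prod_subtype _ (fun x => ?_) f)
  simp

lemma old_term {V : Type*} [Fintype V] {n : ℕ} (τ : SimpleGraph V) (g : V → ℕ → ℝ)
    (T : SimpleGraph (Fin n)) (w : Fin n) : oldPart τ g T w =
    open Classical in ∑ ψ : V → Fin n, if IsEmb τ (extendTree T w) (fun v => (ψ v).castSucc) then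
      ∏ v, g v (degR (extendTree T w) (ψ v).castSucc) else 0 := by
  classical
  rw [oldPart]
  refine Finset.sum_congr rfl fun ψ _ => ?_
  refine if_congr isEmb_castSucc.symm ?_ rfl
  simp only [degR_castSucc]

lemma oldPart_le_obsSum {V : Type*} [Fintype V] {n : ℕ} (τ : SimpleGraph V) {g : V → ℕ → ℝ}
    (hg : ∀ v d, 0 ≤ g v d) (T : SimpleGraph (Fin n)) (w : Fin n) :
    oldPart τ g T w ≤ obsSum τ g (extendTree T w) := by
  classical
  rw [old_term, obsSum]
  have hinj : Function.Injective (fun (ψ : V → Fin n) v => (ψ v).castSucc) := fun a b hab =>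
    funext fun v => Fin.castSucc_injective _ (congrFun hab v)
  rw [← Finset.sum_image (s := Finset.univ) (g := fun (ψ : V → Fin n) v => (ψ v).castSucc)
    (f := fun φ => if IsEmb τ (extendTree T w) φ then
      ∏ v, g v (degR (extendTree T w) (φ v)) else 0) hinj.injOn]
  refine Finset.sum_le_sum_of_subset_of_nonneg (Finset.subset_univ _) fun φ _ _ => ?_
  split_ifs
  · exact Finset.prod_nonneg fun v _ => hg _ _
  · exact le_rfl

lemma obsSum_extend_le {V : Type*} [Fintype V] {n : ℕ} (τ : SimpleGraph V) {g : V → ℕ → ℝ}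
    (hg : ∀ v d, 0 ≤ g v d) (T : SimpleGraph (Fin n)) (w : Fin n) :
    obsSum τ g (extendTree T w) ≤ oldPart τ g T w + ∑ u, newPart τ g T w u := by
  classical
  have hnew : ∑ u, newPart τ g T w u = ∑ c : (u : V) × (({u}ᶜ : Set V) → Fin n),
      if IsEmb τ (extendTree T w) (extendMap c.1 c.2) then
        ∏ v, g v (degR (extendTree T w) (extendMap c.1 c.2 v)) else 0 := by
    rw [Fintype.sum_sigma]
    refine Finset.sum_congr rfl fun u _ => ?_
    rw [newPart]
    refine Finset.sum_congr rfl fun χ _ => ?_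
    simp only [isEmb_extendMap]
    refine if_congr Iff.rfl ?_ rfl
    rw [prod_compl_singleton u, extendMap_self, degR_last]
    simp only [extendMap_coe, degR_castSucc]
  rw [old_term, hnew, obsSum]
  refine sum_le_sum_of_cover (fun φ : V → Fin (n + 1) => if IsEmb τ (extendTree T w) φ then
      ∏ v, g v (degR (extendTree T w) (φ v)) else 0) (fun φ => ?_)
    (fun (ψ : V → Fin n) v => (ψ v).castSucc) (fun c : (u : V) × (({u}ᶜ : Set V) → Fin n) =>
      extendMap c.1 c.2) fun φ hφ => ?_
  · split_ifs
    · exact Finset.prod_nonneg fun v _ => hg _ _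
    · exact le_rfl
  · have hemb : IsEmb τ (extendTree T w) φ := by
      by_contra h
      exact hφ (if_neg h)
    rcases map_cases hemb.1 with h | ⟨u, χ, h⟩
    · exact Or.inl h
    · exact Or.inr ⟨⟨u, χ⟩, h⟩

/-- Mean weight of an old embedding `ψ` after one step: only attachments to the image of `ψ` change
it, each affecting exactly one factor. -/
lemma mean_old_term {α : ℝ} (hα : 0 < α) {V : Type*} [Fintype V] [DecidableEq V] {n : ℕ}
    (hn : 2 ≤ n) {T : SimpleGraph (Fin n)} (hT : Good T) (g : V → ℕ → ℝ) {ψ : V → Fin n}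
    (hψ : Function.Injective ψ) :
    ∑ w, attachProb α T w * ∏ v, g v (degR T (ψ v) + if ψ v = w then 1 else 0) =
      ∏ v, g v (degR T (ψ v)) +
        ∑ u, attachProb α T (ψ u) * ((g u (degR T (ψ u) + 1) - g u (degR T (ψ u))) *
          ∏ v ∈ Finset.univ.erase u, g v (degR T (ψ v))) := by
  have h1 : ∏ v, g v (degR T (ψ v)) = ∑ w, attachProb α T w * ∏ v, g v (degR T (ψ v)) := by
    rw [← Finset.sum_mul, sum_attachProb hα hn hT, one_mul]
  rw [← sub_eq_iff_eq_add']
  nth_rewrite 1 [h1]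
  rw [← Finset.sum_sub_distrib]
  simp only [← mul_sub]
  symm
  refine Finset.sum_of_injOn ψ hψ.injOn (fun _ _ => Finset.mem_coe.2 (Finset.mem_univ _))
    (fun w _ hw => ?_) fun u _ => ?_
  · have : ∀ v, ψ v ≠ w := fun v hv => hw ⟨v, by simp, hv⟩
    simp [this]
  · congr 1
    rw [← Finset.mul_prod_erase _ _ (Finset.mem_univ u),
      ← Finset.mul_prod_erase _ (fun v => g v (degR T (ψ v))) (Finset.mem_univ u), if_pos rfl,
      sub_mul]
    congr 2
    refine Finset.prod_congr rfl fun v hv => ?_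
    rw [if_neg fun h => (Finset.ne_of_mem_erase hv) (hψ h), add_zero]

lemma attachProb_mul_eq {α : ℝ} {n : ℕ} (T : SimpleGraph (Fin n)) (w : Fin n) (x : ℝ) :
    attachProb α T w * x =
      (((degR T w : ℝ) - 1 + α) * x) / ((1 + α) * (n : ℝ) - 2) := by
  rw [attachProb, div_mul_eq_mul_div]

lemma sum_dec_mul_prod {V : Type*} [Fintype V] [DecidableEq V] (ℓ : V → ℕ) (D : ℝ) (f : V → ℝ) :
    (1 + ((∑ v, ℓ v : ℕ) : ℝ) / D) * ∏ v, f v =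
      ∏ v, f v + ∑ u, ((ℓ u : ℝ) * f u) / D * ∏ v ∈ Finset.univ.erase u, f v := by
  rw [add_mul, one_mul, Nat.cast_sum, Finset.sum_div, Finset.sum_mul]
  congr 1
  refine Finset.sum_congr rfl fun u _ => ?_
  rw [← Finset.mul_prod_erase _ f (Finset.mem_univ u)]
  ring

/-- If each factor satisfies the drift inequality from below, then so does the mean of the part of
the observable carried by old embeddings. -/
lemma mean_oldPart_ge {α : ℝ} (hα : 0 < α) {V : Type*} [Fintype V] {n : ℕ} (hn : 2 ≤ n)
    {T : SimpleGraph (Fin n)} (hT : Good T) (τ : SimpleGraph V) (ℓ : V → ℕ) {g : V → ℕ → ℝ}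
    (hg : ∀ v d, 0 ≤ g v d)
    (hd : ∀ v d, 1 ≤ d → (ℓ v : ℝ) * g v d ≤ ((d : ℝ) - 1 + α) * (g v (d + 1) - g v d)) :
    (1 + ((∑ v, ℓ v : ℕ) : ℝ) / ((1 + α) * (n : ℝ) - 2)) * obsSum τ g T ≤
      ∑ w, attachProb α T w * oldPart τ g T w := by
  classical
  simp only [oldPart, obsSum, Finset.mul_sum]
  rw [Finset.sum_comm]
  refine Finset.sum_le_sum fun ψ _ => ?_
  by_cases h : IsEmb τ T ψ
  · simp only [if_pos h]
    rw [mean_old_term hα hn hT g h.1, sum_dec_mul_prod]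
    refine (add_le_add_iff_left _).2 (Finset.sum_le_sum fun u _ => ?_)
    rw [← mul_assoc, attachProb_mul_eq]
    refine mul_le_mul_of_nonneg_right ?_ (Finset.prod_nonneg fun v _ => hg _ _)
    exact div_le_div_of_nonneg_right (hd u _ (hT.1 _)) (denom_pos hα hn).le
  · simp [if_neg h]

lemma mean_oldPart_eq {α : ℝ} (hα : 0 < α) {V : Type*} [Fintype V] {n : ℕ} (hn : 2 ≤ n)
    {T : SimpleGraph (Fin n)} (hT : Good T) (τ : SimpleGraph V) (ℓ : V → ℕ) {g : V → ℕ → ℝ}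
    (hd : ∀ v d, 1 ≤ d → (ℓ v : ℝ) * g v d = ((d : ℝ) - 1 + α) * (g v (d + 1) - g v d)) :
    (1 + ((∑ v, ℓ v : ℕ) : ℝ) / ((1 + α) * (n : ℝ) - 2)) * obsSum τ g T =
      ∑ w, attachProb α T w * oldPart τ g T w := by
  classical
  simp only [oldPart, obsSum, Finset.mul_sum]
  rw [Finset.sum_comm]
  refine Finset.sum_congr rfl fun ψ _ => ?_
  by_cases h : IsEmb τ T ψ
  · simp only [if_pos h]
    rw [mean_old_term hα hn hT g h.1, sum_dec_mul_prod]
    congr 1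
    refine Finset.sum_congr rfl fun u _ => ?_
    rw [← mul_assoc, attachProb_mul_eq, hd u _ (hT.1 _)]
  · simp [if_neg h]

/-! ### Rising-factorial weights -/

/-- The rising factorial `(d-1+α)(d+α)⋯(d-1+α+ℓ-1)`. With these weights in place of descending
factorials the drift of an embedding sum has no lower-order correction. The truncated subtraction
keeps the factors positive at `d = 0`, a degree that does not occur in the chain. -/
def rise (α : ℝ) (ℓ d : ℕ) : ℝ := ∏ i ∈ Finset.range ℓ, (((d - 1 : ℕ) : ℝ) + α + i)

lemma rise_nonneg {α : ℝ} (hα : 0 < α) (ℓ d : ℕ) : 0 ≤ rise α ℓ d :=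
  Finset.prod_nonneg fun i _ => by positivity

lemma rise_shift (α : ℝ) (ℓ d : ℕ) (hd : 1 ≤ d) :
    ((d : ℝ) - 1 + α) * rise α ℓ (d + 1) = rise α (ℓ + 1) d := by
  obtain ⟨d, rfl⟩ := Nat.exists_eq_add_of_le' hd
  rw [rise, rise, Finset.prod_range_succ', mul_comm]
  simp only [Nat.add_sub_cancel, Nat.cast_add, Nat.cast_one, Nat.cast_zero]
  congr 1
  · exact Finset.prod_congr rfl fun i _ => by ring
  · ring

lemma rise_drift (α : ℝ) (ℓ d : ℕ) (hd : 1 ≤ d) :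
    (ℓ : ℝ) * rise α ℓ d = ((d : ℝ) - 1 + α) * (rise α ℓ (d + 1) - rise α ℓ d) := by
  rw [mul_sub, rise_shift α ℓ d hd, rise, rise, Finset.prod_range_succ, Nat.cast_sub hd]
  push_cast
  ring

lemma descFactorial_le_rise {α : ℝ} (hα : 0 < α) (ℓ d : ℕ) :
    ((d - 1).descFactorial ℓ : ℝ) ≤ rise α ℓ d := by
  rw [Nat.descFactorial_eq_prod_range, rise, Nat.cast_prod]
  refine Finset.prod_le_prod (fun i _ => by positivity) fun i _ => ?_
  have : ((d - 1 - i : ℕ) : ℝ) ≤ ((d - 1 : ℕ) : ℝ) := by exact_mod_cast Nat.sub_le _ _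
  have : (0 : ℝ) ≤ i := by positivity
  linarith

lemma descFactorial_drift {α : ℝ} (hα : 0 < α) (ℓ d : ℕ) (hd : 1 ≤ d) :
    (ℓ : ℝ) * ((d - 1).descFactorial ℓ : ℝ) ≤
      ((d : ℝ) - 1 + α) * (((d + 1 - 1).descFactorial ℓ : ℝ) - ((d - 1).descFactorial ℓ : ℝ)) := by
  obtain ⟨x, rfl⟩ := Nat.exists_eq_add_of_le' hd
  simp only [Nat.add_sub_cancel]
  rcases ℓ with _ | ℓ
  · simp
  rw [Nat.succ_descFactorial_succ, Nat.descFactorial_succ]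
  push_cast
  have h0 : (0 : ℝ) ≤ x.descFactorial ℓ := by positivity
  have hx : (0 : ℝ) ≤ x := by positivity
  by_cases h : ℓ ≤ x
  · rw [Nat.cast_sub h]
    have h1 : (0 : ℝ) ≤ (ℓ : ℝ) := by positivity
    have e : ((x : ℝ) + 1 - 1 + α) * ((x + 1) * x.descFactorial ℓ - (x - ℓ) * x.descFactorial ℓ) -
        (ℓ + 1) * ((x - ℓ) * x.descFactorial ℓ) =
        (ℓ + 1) * ((ℓ : ℝ) + α) * x.descFactorial ℓ := by ring
    have : 0 ≤ ((ℓ : ℝ) + 1) * ((ℓ : ℝ) + α) * x.descFactorial ℓ := by positivity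
    linarith
  · rw [Nat.descFactorial_eq_zero_iff_lt.2 (not_le.1 h)]
    simp

/-- The decoration of `τ - u` obtained by adding one at each neighbour of `u`. -/
def bumpDec {V : Type*} (τ : SimpleGraph V) (ℓ : V → ℕ) (u : V) (v : ({u}ᶜ : Set V)) : ℕ :=
  open Classical in ℓ v + if τ.Adj v u then 1 else 0

/-- Mean contribution of the embeddings sending `u` to the new vertex, when `u` has a neighbour
`v₀`: the new vertex must be attached to the image of `v₀`, which has probability proportional to
`deg - 1 + α`, and this factor is absorbed by the rising factorial at `v₀`. -/
lemma mean_newPart_le {α : ℝ} (hα : 0 < α) {V : Type*} [Fintype V] {n : ℕ} (hn : 2 ≤ n)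
    {T : SimpleGraph (Fin n)} (hT : Good T) (τ : SimpleGraph V) (ℓ : V → ℕ) {u v₀ : V}
    (hv₀ : τ.Adj v₀ u) :
    ∑ w, attachProb α T w * newPart τ (fun v => rise α (ℓ v)) T w u ≤
      open Classical in if ∀ v, τ.Adj v u → v = v₀ then
        rise α (ℓ u) 1 * obsSum (τ.induce {u}ᶜ) (fun v => rise α (bumpDec τ ℓ u v)) T /
          ((1 + α) * (n : ℝ) - 2)
      else 0 := by
  classical
  have hD := denom_pos hα hn
  let x₀ : ({u}ᶜ : Set V) := ⟨v₀, hv₀.ne⟩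
  -- only `w = χ v₀` contributes
  have key : ∀ χ : ({u}ᶜ : Set V) → Fin n, ∀ w,
      (IsEmb (τ.induce {u}ᶜ) T χ ∧ ∀ v : ({u}ᶜ : Set V), χ v = w ↔ τ.Adj v u) →
      w = χ x₀ ∧ ∀ v, τ.Adj v u → v = v₀ := by
    rintro χ w ⟨he, hc⟩
    have hw : χ x₀ = w := (hc x₀).2 hv₀
    refine ⟨hw.symm, fun v hv => ?_⟩
    have := (hc ⟨v, hv.ne⟩).2 hv
    exact congrArg Subtype.val (he.1 (this.trans hw.symm))
  simp only [newPart, Finset.mul_sum]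
  rw [Finset.sum_comm]
  split_ifs with huniq
  · have hs : obsSum (τ.induce {u}ᶜ) (fun v => rise α (bumpDec τ ℓ u v)) T =
        ∑ χ : ({u}ᶜ : Set V) → Fin n, if IsEmb (τ.induce {u}ᶜ) T χ then
          ∏ v, rise α (bumpDec τ ℓ u v) (degR T (χ v)) else 0 := by
      rw [obsSum]
      congr!
    rw [hs, Finset.mul_sum, Finset.sum_div]
    refine Finset.sum_le_sum fun χ _ => ?_
    rw [Finset.sum_eq_single (χ x₀)]
    · by_cases he : IsEmb (τ.induce {u}ᶜ) T χ
      · rw [if_pos he]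
        split_ifs with hc
        · rw [attachProb_mul_eq]
          refine div_le_div_of_nonneg_right (le_of_eq ?_) hD.le
          rw [mul_left_comm]
          congr 1
          rw [← Finset.mul_prod_erase _ _ (Finset.mem_univ x₀),
            ← Finset.mul_prod_erase _ (fun v => rise α (bumpDec τ ℓ u v) (degR T (χ v)))
              (Finset.mem_univ x₀), if_pos rfl, ← mul_assoc, rise_shift _ _ _ (hT.1 _)]
          have hx₀ : bumpDec τ ℓ u x₀ = ℓ x₀ + 1 := by rw [bumpDec, if_pos hv₀]
          rw [hx₀]
          congr 1
          refine Finset.prod_congr rfl fun v hv => ?_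
          have hne := Finset.ne_of_mem_erase hv
          rw [if_neg fun h => hne (he.1 h), bumpDec, if_neg fun h => hne (Subtype.ext (huniq _ h)),
            add_zero, add_zero]
        · rw [mul_zero]
          exact div_nonneg (mul_nonneg (rise_nonneg hα _ _)
            (Finset.prod_nonneg fun v _ => rise_nonneg hα _ _)) hD.le
      · rw [if_neg fun h => he h.1, if_neg he]
        simp
    · intro w _ hw
      rw [if_neg fun h => hw (key χ w h).1, mul_zero]
    · simp
  · refine le_of_eq (Finset.sum_eq_zero fun χ _ => Finset.sum_eq_zero fun w _ => ?_)
    rw [if_neg fun h => huniq (key χ w h).2, mul_zero]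

lemma stepMean_le {α : ℝ} (hα : 0 < α) {V : Type*} [Fintype V] {n : ℕ} (hn : 2 ≤ n)
    {T : SimpleGraph (Fin n)} (hT : Good T) (τ : SimpleGraph V) (ℓ : V → ℕ) :
    stepMean α (obsSum τ fun v => rise α (ℓ v)) T ≤
      (1 + ((∑ v, ℓ v : ℕ) : ℝ) / ((1 + α) * (n : ℝ) - 2)) * obsSum τ (fun v => rise α (ℓ v)) T +
        ∑ u, ∑ w, attachProb α T w * newPart τ (fun v => rise α (ℓ v)) T w u := by
  rw [mean_oldPart_eq hα hn hT τ ℓ fun v d hd => rise_drift α (ℓ v) d hd, Finset.sum_comm,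
    ← Finset.sum_add_distrib]
  refine Finset.sum_le_sum fun w _ => ?_
  rw [← Finset.mul_sum, ← mul_add]
  exact mul_le_mul_of_nonneg_left (obsSum_extend_le τ (fun v d => rise_nonneg hα _ _) T w)
    (attachProb_pos hα hn hT w).le

/-- The mean contribution of embeddings of a one-vertex tree to the new vertex is bounded. -/
lemma mean_newPart_le_of_subsingleton {α : ℝ} (hα : 0 < α) {V : Type*} [Fintype V]
    [Subsingleton V] {n : ℕ} (hn : 2 ≤ n) {T : SimpleGraph (Fin n)} (hT : Good T)
    (τ : SimpleGraph V) (ℓ : V → ℕ) (u : V) :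
    ∑ w, attachProb α T w * newPart τ (fun v => rise α (ℓ v)) T w u ≤ rise α (ℓ u) 1 := by
  classical
  rw [← one_mul (rise α (ℓ u) 1), ← sum_attachProb hα hn hT, Finset.sum_mul]
  refine Finset.sum_le_sum fun w _ =>
    mul_le_mul_of_nonneg_left ?_ (attachProb_pos hα hn hT w).le
  have : IsEmpty ({u}ᶜ : Set V) := ⟨fun v => v.2 (Subsingleton.elim _ _)⟩
  refine (Finset.sum_eq_single isEmptyElim (fun χ _ hχ => absurd (Subsingleton.elim _ _) hχ)
    fun h => absurd (Subsingleton.elim _ _) (by simpa using h)).trans_le ?_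
  split_ifs
  · simp
  · exact rise_nonneg hα _ _

/-! ### Linear recursions with polynomial growth -/

/-- A recursion with growth rate `q / t` and forcing of order `t ^ (δ - 1)` is of order at most
`t ^ γ` as soon as `q ≤ γ` and `δ < γ`: after division by `t ^ γ` the increments are summable. -/
lemma le_rpow_of_recursion {t₀ : ℝ} (ht : 0 < t₀) {a : ℕ → ℝ} {q γ δ C : ℝ} (hγ : 1 ≤ γ)
    (hδ : δ < γ) (hq : q ≤ γ) (ha : ∀ m, 0 ≤ a m) (hC : 0 ≤ C)
    (h : ∀ m : ℕ, a (m + 1) ≤ (1 + q / (t₀ + m)) * a m + C * (t₀ + m) ^ (δ - 1)) :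
    ∃ C' : ℝ, 0 ≤ C' ∧ ∀ m : ℕ, a m ≤ C' * (t₀ + m) ^ γ := by
  have htm : ∀ m : ℕ, 0 < t₀ + m := fun m => by positivity
  have hsum : Summable fun i : ℕ => (t₀ + i) ^ (δ - 1 - γ) := by
    refine ((Real.summable_one_div_nat_add_rpow t₀ (γ + 1 - δ)).2 (by linarith)).congr fun i => ?_
    rw [abs_of_pos (by linarith [htm i]), one_div, ← Real.rpow_neg (by linarith [htm i]), add_comm]
    congr 1
    ring
  have key : ∀ m : ℕ, a m ≤
      (a 0 / t₀ ^ γ + C * ∑ i ∈ Finset.range m, (t₀ + i) ^ (δ - 1 - γ)) * (t₀ + m) ^ γ := by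
    intro m
    induction m with
    | zero => simp [div_mul_cancel₀ _ (Real.rpow_pos_of_pos ht γ).ne']
    | succ m ih =>
      have hp := htm m
      set B := a 0 / t₀ ^ γ + C * ∑ i ∈ Finset.range m, (t₀ + i) ^ (δ - 1 - γ) with hB
      have hB0 : 0 ≤ B := by
        have : 0 ≤ ∑ i ∈ Finset.range m, (t₀ + i) ^ (δ - 1 - γ) :=
          Finset.sum_nonneg fun i _ => (Real.rpow_pos_of_pos (htm i) _).le
        have := ha 0
        positivity
      have hbern : (1 + γ / (t₀ + m)) * (t₀ + m) ^ γ ≤ (t₀ + (m + 1 : ℕ)) ^ γ := by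
        have h1 := one_add_mul_self_le_rpow_one_add (s := 1 / (t₀ + m))
          (by have : 0 < 1 / (t₀ + m) := by positivity
              linarith) hγ
        have h2 : t₀ + (m + 1 : ℕ) = (1 + 1 / (t₀ + m)) * (t₀ + m) := by
          push_cast
          field_simp
          ring
        rw [h2, Real.mul_rpow (by positivity) hp.le]
        refine mul_le_mul_of_nonneg_right ?_ (by positivity)
        rwa [mul_one_div] at h1
      have hmono : (t₀ + m) ^ γ ≤ (t₀ + (m + 1 : ℕ)) ^ γ :=
        Real.rpow_le_rpow hp.le (by push_cast; linarith) (by linarith)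
      have hsplit : (t₀ + m) ^ (δ - 1) = (t₀ + m) ^ (δ - 1 - γ) * (t₀ + m) ^ γ := by
        rw [← Real.rpow_add hp]
        congr 1
        ring
      rw [Finset.sum_range_succ, mul_add, ← add_assoc, ← hB]
      calc a (m + 1) ≤ (1 + q / (t₀ + m)) * a m + C * (t₀ + m) ^ (δ - 1) := h m
        _ ≤ (1 + γ / (t₀ + m)) * (B * (t₀ + m) ^ γ) + C * (t₀ + m) ^ (δ - 1) := by
            refine (add_le_add_iff_right _).2 ?_
            refine (mul_le_mul_of_nonneg_right ?_ (ha m)).trans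
              (mul_le_mul_of_nonneg_left ih (by positivity))
            gcongr
        _ = B * ((1 + γ / (t₀ + m)) * (t₀ + m) ^ γ) +
              C * (t₀ + m) ^ (δ - 1 - γ) * (t₀ + m) ^ γ := by rw [hsplit]; ring
        _ ≤ B * (t₀ + (m + 1 : ℕ)) ^ γ +
              C * (t₀ + m) ^ (δ - 1 - γ) * (t₀ + (m + 1 : ℕ)) ^ γ := by gcongr
        _ = _ := by ring
  have hfin : ∀ m : ℕ, ∑ i ∈ Finset.range m, (t₀ + i) ^ (δ - 1 - γ) ≤
      ∑' i : ℕ, (t₀ + i) ^ (δ - 1 - γ) := fun m =>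
    hsum.sum_le_tsum _ fun i _ => (Real.rpow_pos_of_pos (htm i) _).le
  refine ⟨a 0 / t₀ ^ γ + C * ∑' i : ℕ, (t₀ + i) ^ (δ - 1 - γ), ?_, fun m => (key m).trans ?_⟩
  · have := ha 0
    have : 0 ≤ ∑' i : ℕ, (t₀ + i) ^ (δ - 1 - γ) :=
      tsum_nonneg fun i => (Real.rpow_pos_of_pos (htm i) _).le
    positivity
  · have := hfin m
    have := htm m
    gcongr

/-- A positive sequence with growth rate at least `q / t` is of order at least `t ^ q`. -/
lemma rpow_le_of_recursion {t₀ : ℝ} (ht : 0 < t₀) {a : ℕ → ℝ} {q : ℝ} (hq : 1 ≤ q) {m₀ : ℕ}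
    (h₀ : 0 < a m₀) (h : ∀ m : ℕ, (1 + q / (t₀ + m)) * a m ≤ a (m + 1)) :
    ∃ c : ℝ, 0 < c ∧ ∀ m : ℕ, m₀ ≤ m → c * (t₀ + m) ^ q ≤ a m := by
  have htm : ∀ m : ℕ, 0 < t₀ + m := fun m => by positivity
  -- the shift by `q - 1` makes `(t + q - 1) ^ q` a subsolution of the recursion
  have hs : ∀ m : ℕ, 0 < t₀ + m + (q - 1) := fun m => by linarith [htm m]
  have hc : 0 < a m₀ / (t₀ + m₀ + (q - 1)) ^ q := div_pos h₀ (Real.rpow_pos_of_pos (hs m₀) q)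
  have key : ∀ m : ℕ, m₀ ≤ m →
      a m₀ / (t₀ + m₀ + (q - 1)) ^ q * (t₀ + m + (q - 1)) ^ q ≤ a m := by
    intro m hm
    induction m, hm using Nat.le_induction with
    | base => rw [div_mul_cancel₀ _ (Real.rpow_pos_of_pos (hs m₀) q).ne']
    | succ m hm ih =>
      have hp := htm m
      have hsm := hs m
      have hpq : 0 < t₀ + m + q := by linarith
      have hbern : (t₀ + m) / (t₀ + m + q) * (t₀ + m + q) ^ q ≤ (t₀ + m + (q - 1)) ^ q := by
        have hle : (1 : ℝ) / (t₀ + m + q) ≤ 1 := (div_le_one hpq).2 (by linarith)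
        have h1 := one_add_mul_self_le_rpow_one_add (s := -(1 / (t₀ + m + q))) (by linarith) hq
        have h2 : t₀ + m + (q - 1) = (1 + -(1 / (t₀ + m + q))) * (t₀ + m + q) := by
          field_simp
          ring
        have h3 : (t₀ + m) / (t₀ + m + q) = 1 + q * -(1 / (t₀ + m + q)) := by
          field_simp
          ring
        rw [h2, Real.mul_rpow (by linarith) hpq.le, h3]
        exact mul_le_mul_of_nonneg_right h1 (Real.rpow_pos_of_pos hpq q).le
      have e : t₀ + (m + 1 : ℕ) + (q - 1) = t₀ + m + q := by push_cast; ring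
      rw [e]
      refine le_trans ?_ ((mul_le_mul_of_nonneg_left ih (by positivity)).trans (h m))
      have e2 : (t₀ + m + q) ^ q =
          (1 + q / (t₀ + m)) * ((t₀ + m) / (t₀ + m + q) * (t₀ + m + q) ^ q) := by
        field_simp
      rw [e2, mul_left_comm]
      gcongr
  refine ⟨_, hc, fun m hm => le_trans ?_ (key m hm)⟩
  exact mul_le_mul_of_nonneg_left
    (Real.rpow_le_rpow (htm m).le (by linarith) (by linarith)) hc.le

/-! ### The upper bound -/

/-- The shifted initial time: with it, the normalisation of the attachment probabilities at step `m`
is `(1 + α) * (startTime α k + m)`. -/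
def startTime (α : ℝ) (k : ℕ) : ℝ := (k : ℝ) - 2 / (1 + α)

lemma startTime_pos {α : ℝ} (hα : 0 < α) {k : ℕ} (hk : 2 ≤ k) : 0 < startTime α k := by
  have h1 : (2 : ℝ) ≤ k := by exact_mod_cast hk
  have : 2 / (1 + α) < 2 := by
    rw [div_lt_iff₀ (by linarith)]
    linarith
  rw [startTime]
  linarith

lemma denom_eq {α : ℝ} (hα : 0 < α) (k m : ℕ) :
    (1 + α) * ((k + m : ℕ) : ℝ) - 2 = (1 + α) * (startTime α k + m) := by
  have : (1 + α) ≠ 0 := by linarith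
  rw [startTime]
  push_cast
  field_simp
  ring

lemma integral_sum_paLaw {α : ℝ} {k : ℕ} (S : SimpleGraph (Fin k)) (m : ℕ) {ι : Type*}
    (s : Finset ι) (c : ℝ) (f : SimpleGraph (Fin (k + m)) → ℝ)
    (g : ι → SimpleGraph (Fin (k + m)) → ℝ) :
    ∫ T, (c * f T + ∑ u ∈ s, g u T) ∂paLaw α S m =
      c * ∫ T, f T ∂paLaw α S m + ∑ u ∈ s, ∫ T, g u T ∂paLaw α S m := by
  rw [integral_add .of_finite .of_finite, integral_const_mul,
    integral_finsetSum _ fun _ _ => .of_finite]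

lemma sum_bumpDec {V : Type*} [Fintype V] (τ : SimpleGraph V) (ℓ : V → ℕ) {u v₀ : V}
    (hv₀ : τ.Adj v₀ u) (huniq : ∀ v, τ.Adj v u → v = v₀) :
    open Classical in (∑ v, bumpDec τ ℓ u v) + ℓ u = (∑ v, ℓ v) + 1 := by
  classical
  have h1 : ∑ v : ({u}ᶜ : Set V), (if τ.Adj v u then 1 else 0) = 1 := by
    rw [Finset.sum_eq_single ⟨v₀, hv₀.ne⟩ _ fun h => (h (Finset.mem_univ _)).elim, if_pos hv₀]
    exact fun v _ hv => if_neg fun h => hv (Subtype.ext (huniq _ h))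
  have h2 : ∑ v : ({u}ᶜ : Set V), ℓ v + ℓ u = ∑ v, ℓ v := by
    rw [← Finset.sum_erase_add _ _ (Finset.mem_univ u)]
    congr 1
    refine (Finset.sum_subtype _ (fun v => ?_) ℓ).symm
    simp
  simp only [bumpDec, Finset.sum_add_distrib]
  rw [h1]
  omega

/-- Upper bound for the mean of a connected observable with all decorations at least `2`. The
embeddings using the new vertex at a leaf `u` contribute the observable of `τ - u` with the
decoration of the neighbour of `u` increased by one. As `ℓ u ≥ 2`, the total decoration has gone
down, so that this contribution is of lower order. -/
lemma mean_obs_le {α : ℝ} (hα : 0 < α) {k : ℕ} (hk : 2 ≤ k) {S : SimpleGraph (Fin k)}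
    (hS : Good S) (N : ℕ) : ∀ (V : Type) [Fintype V] (τ : SimpleGraph V) (ℓ : V → ℕ) (γ : ℝ),
      Fintype.card V = N → τ.Connected → (∀ v, 2 ≤ ℓ v) → 1 < γ →
      ((∑ v, ℓ v : ℕ) : ℝ) ≤ γ * (1 + α) → ∃ C : ℝ, 0 ≤ C ∧ ∀ m : ℕ,
        ∫ G, obsSum τ (fun v => rise α (ℓ v)) G ∂paLaw α S m ≤ C * (startTime α k + m) ^ γ := by
  classical
  have ht := startTime_pos hα hk
  induction N with
  | zero =>
    intro V _ τ ℓ γ hV hτ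
    have := hτ.nonempty
    exact absurd hV Fintype.card_ne_zero
  | succ N ih =>
    intro V _ τ ℓ γ hV hτ hℓ hγ hle
    -- an intermediate exponent, still sufficient for the trees with one vertex less
    obtain ⟨δ, hδ1, hδγ, hδ⟩ : ∃ δ : ℝ, 1 < δ ∧ δ < γ ∧ ((∑ v, ℓ v : ℕ) : ℝ) - 1 ≤ δ * (1 + α) := by
      refine ⟨max ((1 + γ) / 2) ((((∑ v, ℓ v : ℕ) : ℝ) - 1) / (1 + α)), ?_, ?_, ?_⟩
      · exact lt_max_of_lt_left (by linarith)
      · refine max_lt (by linarith) ?_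
        rw [div_lt_iff₀ (by linarith)]
        linarith
      · rw [← div_le_iff₀ (by linarith)]
        exact le_max_right _ _
    have hnew : ∀ u, ∃ C : ℝ, 0 ≤ C ∧ ∀ m : ℕ,
        ∫ T, ∑ w, attachProb α T w * newPart τ (fun v => rise α (ℓ v)) T w u ∂paLaw α S m ≤
          C * (startTime α k + m) ^ (δ - 1) := by
      intro u
      rcases subsingleton_or_nontrivial V with hsub | hnt
      · refine ⟨rise α (ℓ u) 1 / startTime α k ^ (δ - 1), by
          have := rise_nonneg hα (ℓ u) 1
          positivity, fun m => ?_⟩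
        have h1 := integral_paLaw_mono (α := α) hS m fun T hT =>
          mean_newPart_le_of_subsingleton hα (by omega) hT τ ℓ u
        rw [integral_paLaw_const hα hk hS] at h1
        refine h1.trans ?_
        rw [div_mul_eq_mul_div, le_div_iff₀ (Real.rpow_pos_of_pos ht _)]
        exact mul_le_mul_of_nonneg_left (Real.rpow_le_rpow ht.le
          (le_add_of_nonneg_right (Nat.cast_nonneg m)) (by linarith)) (rise_nonneg hα _ _)
      · obtain ⟨v₀, hv₀⟩ : ∃ v₀, τ.Adj v₀ u := by
          obtain ⟨v, hv⟩ := (τ.degree_pos_iff_exists_adj u).1 (hτ.preconnected.degree_pos_of_nontrivial u)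
          exact ⟨v, hv.symm⟩
        by_cases huniq : ∀ v, τ.Adj v u → v = v₀
        · have hdeg : τ.degree u = 1 := by
            rw [SimpleGraph.degree_eq_one_iff_existsUnique_adj]
            exact ⟨v₀, hv₀.symm, fun v hv => huniq v hv.symm⟩
          have hbump := sum_bumpDec τ ℓ hv₀ huniq
          have hu := hℓ u
          have hbump' : ((∑ v, bumpDec τ ℓ u v : ℕ) : ℝ) ≤ δ * (1 + α) := by
            have : (∑ v, bumpDec τ ℓ u v) + 1 ≤ ∑ v, ℓ v := by omega
            have : ((∑ v, bumpDec τ ℓ u v : ℕ) : ℝ) + 1 ≤ ((∑ v, ℓ v : ℕ) : ℝ) := by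
              exact_mod_cast this
            linarith
          obtain ⟨C, hC0, hC⟩ := ih ({u}ᶜ : Set V) (τ.induce {u}ᶜ) (bumpDec τ ℓ u) δ
            (by rw [Fintype.card_compl_set, hV]; simp)
            (hτ.induce_compl_singleton_of_degree_eq_one hdeg)
            (fun v => (hℓ v).trans (Nat.le_add_right _ _)) hδ1 hbump'
          have hr := rise_nonneg hα (ℓ u) 1
          refine ⟨rise α (ℓ u) 1 * C / (1 + α), by positivity, fun m => ?_⟩
          have h1 := integral_paLaw_mono (α := α) hS m fun T hT =>
            mean_newPart_le hα (by omega) hT τ ℓ hv₀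
          simp only [if_pos huniq] at h1
          refine h1.trans ?_
          have htm : 0 < startTime α k + m := by positivity
          rw [integral_div, integral_const_mul, denom_eq hα, Real.rpow_sub_one htm.ne']
          calc _ ≤ rise α (ℓ u) 1 * (C * (startTime α k + m) ^ δ) /
                ((1 + α) * (startTime α k + m)) := by
                gcongr
                convert hC m
            _ = _ := by field_simp
        · refine ⟨0, le_rfl, fun m => ?_⟩
          have h1 := integral_paLaw_mono (α := α) hS m fun T hT =>
            mean_newPart_le hα (by omega) hT τ ℓ hv₀
          simp only [if_neg huniq] at h1
          simpa using h1
    choose C hC0 hC using hnew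
    refine le_rpow_of_recursion ht (q := ((∑ v, ℓ v : ℕ) : ℝ) / (1 + α)) (C := ∑ u, C u) hγ.le hδγ
      (by rwa [div_le_iff₀ (by linarith)])
      (fun m => integral_nonneg fun T => obsSum_nonneg τ (fun v d => rise_nonneg hα _ _) T)
      (Finset.sum_nonneg fun u _ => hC0 u) fun m => ?_
    rw [integral_paLaw_succ hα hk hS]
    refine (integral_paLaw_mono (α := α) hS m fun T hT =>
      stepMean_le hα (by omega) hT τ ℓ).trans ?_
    rw [integral_sum_paLaw, denom_eq hα, div_div, Finset.sum_mul]
    exact (add_le_add_iff_left _).2 (Finset.sum_le_sum fun u _ => hC u m)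

/-! ### The lower bound -/

/-- Some tree reachable by the chain contains an embedded copy of `τ` in which the degree of the
image of each `v` is at least `J v`. -/
def Occurs (α : ℝ) {k : ℕ} (S : SimpleGraph (Fin k)) {V : Type*} (τ : SimpleGraph V)
    (J : V → ℕ) : Prop :=
  ∃ (m : ℕ) (T : SimpleGraph (Fin (k + m))) (ψ : V → Fin (k + m)),
    0 < (paLaw α S m).real {T} ∧ IsEmb τ T ψ ∧ ∀ v, J v ≤ degR T (ψ v)

/-- Attaching `j` new vertices to the image of `v₀` raises its degree by `j`. -/
lemma Occurs.pump {α : ℝ} (hα : 0 < α) {k : ℕ} (hk : 2 ≤ k) {S : SimpleGraph (Fin k)}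
    (hS : Good S) {V : Type*} [DecidableEq V] {τ : SimpleGraph V} {J : V → ℕ}
    (h : Occurs α S τ J) (v₀ : V) (j : ℕ) :
    Occurs α S τ (fun v => J v + if v = v₀ then j else 0) := by
  induction j with
  | zero => simpa using h
  | succ j ih =>
    obtain ⟨m, T, ψ, hT, hψ, hJ⟩ := ih
    refine ⟨m + 1, extendTree T (ψ v₀), fun v => (ψ v).castSucc,
      paLaw_real_extend_pos hα hk hS m T hT _, isEmb_castSucc.2 hψ, fun v => ?_⟩
    have h1 := hJ v
    have h2 := degR_castSucc T (ψ v₀) (ψ v)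
    by_cases hv : v = v₀
    · subst hv
      simp only [if_true] at h1 h2 ⊢
      exact (by omega : J v + (j + 1) ≤ degR T (ψ v) + 1).trans h2.ge
    · simp only [if_neg hv] at h1 ⊢
      exact h1.trans ((Nat.le_add_right _ _).trans h2.ge)

/-- Every tree occurs with arbitrarily large degrees: grow it leaf by leaf. -/
lemma occurs_of_isTree {α : ℝ} (hα : 0 < α) {k : ℕ} (hk : 2 ≤ k) {S : SimpleGraph (Fin k)}
    (hS : Good S) (B N : ℕ) : ∀ (V : Type) [Fintype V] (τ : SimpleGraph V),
      Fintype.card V = N → τ.IsTree → Occurs α S τ fun _ => B := by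
  classical
  induction N with
  | zero =>
    intro V _ τ hV hτ
    have := hτ.connected.nonempty
    exact absurd hV Fintype.card_ne_zero
  | succ N ih =>
    intro V _ τ hV hτ
    rcases subsingleton_or_nontrivial V with hsub | hnt
    · obtain ⟨v₀⟩ := hτ.connected.nonempty
      have h0 : Occurs α S τ fun _ => 0 := by
        refine ⟨0, S, fun _ => ⟨0, by omega⟩, ?_, ⟨fun a b _ => Subsingleton.elim a b, fun a b => ?_⟩,
          fun v => Nat.zero_le _⟩
        · simp [paLaw, Measure.real]
        · rw [Subsingleton.elim a b]
          simp
      have h1 := h0.pump hα hk hS v₀ B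
      convert h1 using 2 with v
      simp [Subsingleton.elim v v₀]
    · obtain ⟨u, hu⟩ := hτ.exists_vert_degree_one_of_nontrivial
      obtain ⟨v₀, hv₀, huniq⟩ := SimpleGraph.degree_eq_one_iff_existsUnique_adj.1 hu
      obtain ⟨m, T, χ, hT, hχ, hJ⟩ := ih ({u}ᶜ : Set V) (τ.induce {u}ᶜ)
        (by rw [Fintype.card_compl_set, hV]; simp)
        ⟨hτ.connected.induce_compl_singleton_of_degree_eq_one hu, hτ.isAcyclic.induce _⟩
      let x₀ : ({u}ᶜ : Set V) := ⟨v₀, hv₀.ne'⟩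
      have h0 : Occurs α S τ fun v => if v = u then 0 else B := by
        refine ⟨m + 1, extendTree T (χ x₀), extendMap u χ,
          paLaw_real_extend_pos hα hk hS m T hT _, isEmb_extendMap.2 ⟨hχ, fun v => ⟨fun h => ?_,
            fun h => congrArg χ (Subtype.ext (huniq _ h.symm))⟩⟩, fun v => ?_⟩
        · rw [hχ.1 h]
          exact hv₀.symm
        · by_cases hv : v = u
          · simp [hv]
          · simp only [if_neg hv]
            have h2 := degR_castSucc T (χ x₀) (χ ⟨v, hv⟩)
            rw [← extendMap_coe u χ ⟨v, hv⟩] at h2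
            exact (hJ ⟨v, hv⟩).trans ((Nat.le_add_right _ _).trans h2.ge)
      have h1 := h0.pump hα hk hS u B
      convert h1 using 2 with v
      by_cases hv : v = u <;> simp [hv]

/-- The mean of the observable is positive at some time. -/
lemma exists_mean_obs_pos {α : ℝ} (hα : 0 < α) {k : ℕ} (hk : 2 ≤ k) {S : SimpleGraph (Fin k)}
    (hS : Good S) {V : Type} [Fintype V] {τ : SimpleGraph V} (hτ : τ.IsTree) (ℓ : V → ℕ) :
    ∃ m : ℕ, 0 < ∫ G, obsSum τ (fun v d => ((d - 1).descFactorial (ℓ v) : ℝ)) G ∂paLaw α S m := by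
  classical
  obtain ⟨m, T, ψ, hT, hψ, hJ⟩ :=
    occurs_of_isTree hα hk hS ((∑ v, ℓ v) + 1) _ V τ rfl hτ
  have hnn := fun G : SimpleGraph (Fin (k + m)) => obsSum_nonneg τ
    (g := fun v d => ((d - 1).descFactorial (ℓ v) : ℝ)) (fun v d => Nat.cast_nonneg _) G
  refine ⟨m, ?_⟩
  rw [integral_paLaw]
  refine Finset.sum_pos' (fun G _ => mul_nonneg measureReal_nonneg (hnn G))
    ⟨T, Finset.mem_univ _, mul_pos hT ?_⟩
  refine Finset.sum_pos' (fun φ _ => ?_) ⟨ψ, Finset.mem_univ _, ?_⟩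
  · split_ifs
    · exact Finset.prod_nonneg fun v _ => Nat.cast_nonneg _
    · exact le_rfl
  · rw [if_pos hψ]
    refine Finset.prod_pos fun v _ => ?_
    rw [Nat.cast_pos, Nat.pos_iff_ne_zero, Ne, Nat.descFactorial_eq_zero_iff_lt, not_lt]
    have h1 : (∑ v, ℓ v) + 1 ≤ degR T (ψ v) := hJ v
    have h2 := Finset.single_le_sum (fun i _ => Nat.zero_le (ℓ i)) (Finset.mem_univ v)
    omega

/-- The mean of the observable grows at least as fast as the embeddings of the previous tree make
it grow. -/
lemma mean_obs_succ_ge {α : ℝ} (hα : 0 < α) {k : ℕ} (hk : 2 ≤ k) {S : SimpleGraph (Fin k)}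
    (hS : Good S) {V : Type*} [Fintype V] (τ : SimpleGraph V) (ℓ : V → ℕ) (m : ℕ) :
    (1 + ((∑ v, ℓ v : ℕ) : ℝ) / (1 + α) / (startTime α k + m)) *
        ∫ G, obsSum τ (fun v d => ((d - 1).descFactorial (ℓ v) : ℝ)) G ∂paLaw α S m ≤
      ∫ G, obsSum τ (fun v d => ((d - 1).descFactorial (ℓ v) : ℝ)) G ∂paLaw α S (m + 1) := by
  rw [integral_paLaw_succ hα hk hS, ← integral_const_mul, div_div, ← denom_eq hα]
  refine integral_paLaw_mono hS m fun T hT => ?_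
  refine (mean_oldPart_ge hα (by omega) hT τ ℓ (fun v d => Nat.cast_nonneg _)
    fun v d hd => descFactorial_drift hα (ℓ v) d hd).trans ?_
  exact Finset.sum_le_sum fun w _ => mul_le_mul_of_nonneg_left
    (oldPart_le_obsSum τ (fun v d => Nat.cast_nonneg _) T w)
    (attachProb_pos hα (by omega) hT w).le

/-- If all decorations of `τ` are `≥ 2` and `|ℓ| > 1+α`, then for every
seed of size `k ≥ 2`, `E[F_τ(T_n^S)] ≈ n^{|ℓ|/(1+α)}` (no logarithmic correction). -/
theorem first_moment_no_log (α : ℝ) (hα : 0 < α) (τ : DecTree) (hτ : τ.tree.IsTree)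
    (hdec : ∀ u, 2 ≤ τ.dec u) (hsum : 1 + α < (τ.decSum : ℝ))
    (k : ℕ) (hk : 2 ≤ k) (S : SimpleGraph (Fin k)) (hS : S.IsTree) :
    asympEquiv (fun m => ∫ G, τ.obs G ∂paLaw α S m)
      (fun m => ((k + m : ℕ) : ℝ) ^ ((τ.decSum : ℝ) / (1 + α))) := by
  have hS' := Good.of_isTree hk hS
  have hα1 : 0 < 1 + α := by linarith
  have ht := startTime_pos hα hk
  set t := startTime α k with ht_def
  set q := (τ.decSum : ℝ) / (1 + α) with hq_def
  have hq : 1 < q := (one_lt_div hα1).2 hsum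
  simp only [DecTree.obs, obsG_eq_obsSum]
  obtain ⟨C, hC0, hC⟩ := mean_obs_le hα hk hS' _ _ τ.tree τ.dec q rfl hτ.connected hdec hq
    (div_mul_cancel₀ _ hα1.ne').ge
  obtain ⟨m₀, hm₀⟩ := exists_mean_obs_pos hα hk hS' hτ τ.dec
  obtain ⟨c, hc0, hc⟩ := rpow_le_of_recursion ht hq.le hm₀
    (mean_obs_succ_ge hα hk hS' τ.tree τ.dec)
  have hk0 : (0 : ℝ) < k := by positivity
  have htk : t ≤ k := by
    have : 0 < 2 / (1 + α) := by positivity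
    rw [ht_def, startTime]
    linarith
  -- the constant converting powers of `k + m` into powers of `t + m`
  have hM : 0 < ((k : ℝ) / t) ^ q / c := by positivity
  refine ⟨max C (((k : ℝ) / t) ^ q / c), lt_max_of_lt_right hM, ?_⟩
  filter_upwards [eventually_ge_atTop m₀] with m hm
  have htm : 0 < t + m := by positivity
  have hcm := hc m hm
  constructor
  · calc _ ≤ ∫ G, obsSum τ.tree (fun v => rise α (τ.dec v)) G ∂paLaw α S m :=
          integral_paLaw_mono hS' m fun T _ => obsSum_mono τ.tree (fun v d => Nat.cast_nonneg _)
            (fun v d => descFactorial_le_rise hα _ d) T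
      _ ≤ C * (t + m) ^ q := hC m
      _ ≤ max C (((k : ℝ) / t) ^ q / c) * ((k + m : ℕ) : ℝ) ^ q := by
          push_cast
          gcongr
          exact le_max_left _ _
  · have hle : ((k + m : ℕ) : ℝ) ≤ k / t * (t + m) := by
      have : (1 : ℝ) ≤ k / t := (one_le_div ht).2 htk
      have hmn : (0 : ℝ) ≤ m := Nat.cast_nonneg m
      rw [mul_add, div_mul_cancel₀ _ ht.ne']
      push_cast
      nlinarith
    calc ((k + m : ℕ) : ℝ) ^ q ≤ (k / t * (t + m)) ^ q := by gcongr
      _ = ((k : ℝ) / t) ^ q / c * (c * (t + m) ^ q) := by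
          rw [Real.mul_rpow (by positivity) htm.le]
          field_simp
      _ ≤ ((k : ℝ) / t) ^ q / c * _ := mul_le_mul_of_nonneg_left hcm hM.le
      _ ≤ _ := mul_le_mul_of_nonneg_right (le_max_right _ _)
          ((mul_nonneg hc0.le (by positivity)).trans hcm)

end AffinePA
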